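/- The infinite binary sequence S = S_1 S_2 S_3 ··· is normal: for every nonempty binary string w, the limit as n → ∞ of occ(w, S↾n)/n equals 2^{−|w|}. -/

import Mathlib

/-- `occ w x`: the number of indices `i` with `x[i..i+|w|-1] = w`,
i.e. the number of occurrences of `w` as a substring of `x`. -/
def occ (w x : List Bool) : ℕ :=
  ((List.range (x.length + 1 - w.length)).filter
    (fun i => decide ((x.drop i).take w.length = w))).length

/-- `occB w x`: the number of occurrences of `w` as a substring of `x`
starting at a position divisible by `|w|` (aligned block occurrences). -/
def occB (w x : List Bool) : ℕ :=
  ((List.range (x.length + 1 - w.length)).filter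
    (fun i => decide (i % w.length = 0) && decide ((x.drop i).take w.length = w))).length

/-- `x` is a de Bruijn string of order `n`: it has length `2^n` and every binary
string of length `n` occurs exactly once as a substring of `x ++ x[0..n-2]`. -/
def IsDeBruijn (n : ℕ) (x : List Bool) : Prop :=
  x.length = 2 ^ n ∧ ∀ w : List Bool, w.length = n → occ w (x ++ x.take (n - 1)) = 1

open Classical in
/-- `db n` is the lexicographically least de Bruijn string of order `n`
(using the lexicographic order on `List Bool`, with `false < true`);
`[]` if none exists. -/
noncomputable def db (n : ℕ) : List Bool :=
  if h : ∃ x : List Bool, IsDeBruijn n x ∧ ∀ y, IsDeBruijn n y → x ≤ y then h.choose else []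

/-- The block `B_{n,i} = db_i(n)^t`: `t` copies of the cyclic left shift of `db n` by `i`. -/
noncomputable def Bblk (n t i : ℕ) : List Bool := (List.replicate t ((db n).rotate i)).flatten

/-- The odd part `t` of `n = 2^s * t`. -/
def oddPart (n : ℕ) : ℕ := n / 2 ^ (n.factorization 2)

/-- `Sblk n` is the string `S_n = B_{n,0} B_{n,1} ⋯ B_{n,2^s-1}` where `n = 2^s * t`, `t` odd. -/
noncomputable def Sblk (n : ℕ) : List Bool :=
  ((List.range (2 ^ (n.factorization 2))).map (fun i => Bblk n (oddPart n) i)).flatten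

/-- `Sfin m = S_1 S_2 ⋯ S_m`. -/
noncomputable def Sfin (m : ℕ) : List Bool := ((List.range m).map (fun k => Sblk (k + 1))).flatten

/-- The infinite sequence `S = S_1 S_2 S_3 ⋯`, as a function giving its `i`-th bit. -/
noncomputable def Sseq (i : ℕ) : Bool := (Sfin (i + 1)).getD i false

/-- For odd `n`, `S_n = db(n)^n`. -/
noncomputable def Sodd (n : ℕ) : List Bool := (List.replicate n (db n)).flatten


lemma exists_mseq (n : ℕ) (hn : 1 ≤ n) : ∃ b : ℕ → ZMod 2, (∀ i < n - 1, b i = 0) ∧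
    (∀ i, b (i + (2 ^ n - 1)) = b i) ∧ (∀ i < 2 ^ n - 1, ∃ t < n, b (i + t) ≠ 0) ∧
    (∀ i < 2 ^ n - 1, ∀ j < 2 ^ n - 1, (∀ t < n, b (i + t) = b (j + t)) → i = j) := by
  have hn0 : n ≠ 0 := by omega
  have : Fact (Nat.Prime 2) := ⟨Nat.prime_two⟩
  let F := GaloisField 2 n
  have : Finite F := Nat.finite_of_card_ne_zero (by
    rw [GaloisField.card 2 n hn0]; positivity)
  obtain ⟨g, hg⟩ := IsCyclic.exists_generator (α := Fˣ)
  have hord : orderOf g = 2 ^ n - 1 := by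
    rw [orderOf_eq_card_of_forall_mem_zpowers hg, Nat.card_units, GaloisField.card 2 n hn0]
  have hfr : Module.finrank (ZMod 2) F = n := GaloisField.finrank 2 hn0
  let α : F := (g : F)
  have hα0 : α ≠ 0 := g.ne_zero
  have hdeg : (minpoly (ZMod 2) α).natDegree = n := by
    refine Eq.trans ((Field.primitive_element_iff_minpoly_natDegree_eq (ZMod 2) α).1 ?_) hfr
    rw [eq_top_iff]
    intro x _
    by_cases hx : x = 0
    · rw [hx]; exact zero_mem _
    · obtain ⟨k, hk⟩ := Subgroup.mem_zpowers_iff.1 (hg (Units.mk0 x hx))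
      have : x = α ^ k := by
        have := congrArg (fun u : Fˣ => (u : F)) hk
        simpa using this.symm
      rw [this]
      exact zpow_mem (IntermediateField.mem_adjoin_simple_self _ _) k
  have hli : LinearIndependent (ZMod 2) (fun i : Fin n => α ^ (i : ℕ)) := by
    have := linearIndependent_pow (K := ZMod 2) α
    rw [hdeg] at this
    exact this
  have : Nonempty (Fin n) := ⟨⟨0, hn⟩⟩
  let B := basisOfLinearIndependentOfCardEqFinrank hli (by rw [hfr]; simp)
  have hB : ∀ i : Fin n, B i = α ^ (i : ℕ) := fun i => by
    simp [B]
  let L : F →ₗ[ZMod 2] ZMod 2 := B.constr (ZMod 2) (fun i => if (i : ℕ) = n - 1 then 1 else 0)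
  have hL : ∀ i < n, L (α ^ i) = if i = n - 1 then 1 else 0 := by
    intro i hi
    have := B.constr_basis (ZMod 2) (fun i : Fin n => if (i : ℕ) = n - 1 then (1 : ZMod 2) else 0) ⟨i, hi⟩
    rw [hB] at this
    exact this
  have hL0 : ∀ d : F, (∀ t < n, L (d * α ^ t) = 0) → d = 0 := by
    intro d hd
    by_contra hne
    have hz : L ∘ₗ LinearMap.mulLeft (ZMod 2) d = 0 := by
      apply B.ext
      intro i
      simp [hB, hd i i.2]
    have h1 := congrArg (fun f => f (d⁻¹ * α ^ (n - 1))) hz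
    simp only [LinearMap.comp_apply, LinearMap.mulLeft_apply, LinearMap.zero_apply] at h1
    rw [mul_inv_cancel_left₀ hne, hL _ (by omega)] at h1
    simp at h1
  refine ⟨fun i => L (α ^ i), ?_, ?_, ?_, ?_⟩
  · intro i hi
    simp only
    rw [hL i (by omega), if_neg (by omega)]
  · intro i
    have : α ^ (2 ^ n - 1) = 1 := by
      rw [← hord]
      have : ((g ^ orderOf g : Fˣ) : F) = ((1 : Fˣ) : F) := by rw [pow_orderOf_eq_one]
      rw [Units.val_pow_eq_pow_val, Units.val_one] at this
      exact this
    simp only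
    rw [pow_add, this, mul_one]
  · intro i _
    by_contra! h
    exact pow_ne_zero i hα0 (hL0 (α ^ i) (fun t ht => by rw [← pow_add]; exact h t ht))
  · intro i hi j hj h
    have h1 : α ^ i - α ^ j = 0 := hL0 _ (fun t ht => by
      rw [sub_mul, ← pow_add, ← pow_add, map_sub, sub_eq_zero]; exact h t ht)
    have h2 : g ^ i = g ^ j := by
      apply Units.ext
      simpa using sub_eq_zero.1 h1
    rw [← hord] at hi hj
    exact pow_injOn_Iio_orderOf hi hj h2

lemma occ_count (w x : List Bool) :
    occ w x = Nat.count (fun j => (x.drop j).take w.length = w) (x.length + 1 - w.length) := by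
  rw [occ, Nat.count, List.countP_eq_length_filter]

lemma win_iff (w x : List Bool) (hw : w ≠ []) (j : ℕ) :
    (x.drop j).take w.length = w ↔
      j + w.length ≤ x.length ∧ ∀ t < w.length, x.getD (j + t) false = w.getD t false := by
  have hk : 0 < w.length := List.length_pos_iff.2 hw
  constructor
  · intro h
    have hl : j + w.length ≤ x.length := by
      have := congrArg List.length h
      simp at this
      omega
    refine ⟨hl, fun t ht => ?_⟩
    have h2 : ((x.drop j).take w.length).getD t false = w.getD t false := by rw [h]
    rw [← h2]
    simp [List.getD_eq_getElem?_getD, ht, List.getElem?_drop]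
  · rintro ⟨hl, h⟩
    apply List.ext_getElem
    · simp; omega
    · intro i h1 h2
      have h3 := h i h2
      rw [List.getD_eq_getElem _ _ (by omega), List.getD_eq_getElem _ _ h2] at h3
      simpa using h3

lemma exists_deBruijn (n : ℕ) (hn : 1 ≤ n) : ∃ x, IsDeBruijn n x := by
  obtain ⟨b, h0, hper, hnz, hinj⟩ := exists_mseq n hn
  have hn2 : n < 2 ^ n := Nat.lt_two_pow_self
  let c : ℕ → Bool := fun i => if i = 0 then false else decide (b (i - 1) = 1)
  have hbool : ∀ u v : ZMod 2, decide (u = 1) = decide (v = 1) → u = v := by decide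
  have hb0 : ∀ u : ZMod 2, decide (u = 1) = false → u = 0 := by decide
  have hc0 : ∀ t < n, c t = false := by
    intro t ht
    simp only [c]
    split_ifs with h
    · rfl
    · rw [h0 _ (by omega)]; rfl
  have hcN : ∀ t < n - 1, c (2 ^ n + t) = c t := by
    intro t ht
    rw [hc0 t (by omega)]
    simp only [c]
    rw [if_neg (by omega), show 2 ^ n + t - 1 = t + (2 ^ n - 1) by omega, hper, h0 _ ht]; rfl
  let x := (List.range (2 ^ n)).map c
  have hx : x ++ x.take (n - 1) = (List.range (2 ^ n + (n - 1))).map c := by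
    apply List.ext_getElem
    · simp [x]; omega
    · intro i h1 h2
      simp only [List.length_map, List.length_range] at h2
      by_cases hi : i < 2 ^ n
      · rw [List.getElem_append_left (by simpa [x] using hi)]
        simp [x]
      · rw [List.getElem_append_right (by simpa [x] using hi)]
        simp only [x, List.getElem_take, List.getElem_map, List.getElem_range, List.length_map,
          List.length_range]
        rw [← hcN _ (by omega)]
        congr 1; omega
  refine ⟨x, by simp [x], ?_⟩
  intro v hv
  have hvne : v ≠ [] := by rintro rfl; simp at hv; omega
  rw [hx, occ_count]
  have hlen : ((List.range (2 ^ n + (n - 1))).map c).length + 1 - v.length = 2 ^ n := by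
    simp [hv]; omega
  rw [hlen, Nat.count_eq_card_filter_range]
  let f : Fin (2 ^ n) → (Fin n → Bool) := fun j t => c (j + t)
  have hf : Function.Injective f := by
    have key : ∀ i j : Fin (2 ^ n), (i : ℕ) < j → f i ≠ f j := by
      intro i j hij h
      have h' : ∀ t < n, c (i + t) = c (j + t) := fun t ht => congrFun h ⟨t, ht⟩
      have hj := j.2
      have cs : ∀ m : ℕ, 0 < m → ∀ t, c (m + t) = decide (b (m - 1 + t) = 1) := by
        intro m hm t
        simp only [c]
        rw [if_neg (by omega), show m + t - 1 = m - 1 + t by omega]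
      by_cases hi : (i : ℕ) = 0
      · obtain ⟨t, ht, hbt⟩ := hnz (j - 1) (by omega)
        have := h' t ht
        rw [hi, zero_add, hc0 t ht, cs j (by omega)] at this
        exact hbt (hb0 _ this.symm)
      · have := hinj (i - 1) (by omega) (j - 1) (by omega) (fun t ht => by
          have := h' t ht
          rw [cs i (by omega), cs j (by omega)] at this
          exact hbool _ _ this)
        omega
    intro i j h
    rcases lt_trichotomy (i : ℕ) j with hij | hij | hij
    · exact absurd h (key i j hij)
    · exact Fin.ext hij
    · exact absurd h.symm (key j i hij)
  have hbij : Function.Bijective f := by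
    rw [Fintype.bijective_iff_injective_and_card]
    exact ⟨hf, by simp⟩
  obtain ⟨j, hj, huniq⟩ := hbij.existsUnique (fun t => v.getD t false)
  have hchar : ∀ i, i < 2 ^ n → ((((List.range (2 ^ n + (n - 1))).map c).drop i).take v.length = v
      ↔ ∀ t < n, c (i + t) = v.getD t false) := by
    intro i hi
    rw [win_iff _ _ hvne, hv]
    constructor
    · rintro ⟨_, h⟩ t ht
      rw [← h t ht, List.getD_eq_getElem _ _ (by simp; omega)]
      simp
    · intro h
      refine ⟨by simp; omega, fun t ht => ?_⟩
      rw [← h t ht, List.getD_eq_getElem _ _ (by simp; omega)]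
      simp
  rw [Finset.card_eq_one]
  refine ⟨j, ?_⟩
  ext i
  simp only [Finset.mem_filter, Finset.mem_range, Finset.mem_singleton]
  constructor
  · rintro ⟨hi, h⟩
    have := huniq ⟨i, hi⟩ (by
      funext t
      exact (hchar i hi).1 h t t.2)
    rw [← this]
  · rintro rfl
    exact ⟨j.2, (hchar j j.2).2 (fun t ht => congrFun hj ⟨t, ht⟩)⟩

lemma db_spec (n : ℕ) (hn : 1 ≤ n) : IsDeBruijn n (db n) := by
  have h : ∃ x : List Bool, IsDeBruijn n x ∧ ∀ y, IsDeBruijn n y → x ≤ y := by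
    obtain ⟨a, ha, hmin⟩ := Set.exists_min_image {x | IsDeBruijn n x} id
      ((List.finite_length_eq Bool (2 ^ n)).subset (fun x hx => hx.1)) (exists_deBruijn n hn)
    exact ⟨a, ha, hmin⟩
  rw [db, dif_pos h]
  exact h.choose_spec.1

lemma occ_count_length (w x : List Bool) (hw : w ≠ []) :
    occ w x = Nat.count (fun j => (x.drop j).take w.length = w) x.length := by
  have hk : 0 < w.length := List.length_pos_iff.2 hw
  rw [occ_count, Nat.count_eq_card_filter_range, Nat.count_eq_card_filter_range]
  congr 1
  ext i
  simp only [Finset.mem_filter, Finset.mem_range]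
  constructor
  · rintro ⟨h1, h2⟩
    exact ⟨by omega, h2⟩
  · rintro ⟨h1, h2⟩
    have := ((win_iff w x hw i).1 h2).1
    exact ⟨by omega, h2⟩

lemma count_append_left (w x y : List Bool) (hw : w ≠ []) :
    occ w x ≤ Nat.count (fun j => ((x ++ y).drop j).take w.length = w) x.length ∧
    Nat.count (fun j => ((x ++ y).drop j).take w.length = w) x.length ≤ occ w x + w.length := by
  have hk : 0 < w.length := List.length_pos_iff.2 hw
  rw [occ_count_length w x hw, Nat.count_eq_card_filter_range, Nat.count_eq_card_filter_range]
  have hget : ∀ i, i < x.length → (x ++ y).getD i false = x.getD i false :=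
    fun i hi => List.getD_append _ _ _ _ hi
  constructor
  · apply Finset.card_le_card
    intro i
    simp only [Finset.mem_filter, Finset.mem_range]
    rintro ⟨h1, h2⟩
    refine ⟨h1, ?_⟩
    rw [win_iff _ _ hw] at h2 ⊢
    refine ⟨by rw [List.length_append]; omega, fun t ht => ?_⟩
    rw [hget _ (by omega)]
    exact h2.2 t ht
  · have : Finset.filter (fun j => ((x ++ y).drop j).take w.length = w) (Finset.range x.length) ⊆
        Finset.filter (fun j => (x.drop j).take w.length = w) (Finset.range x.length) ∪
          Finset.Ico (x.length - w.length) x.length := by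
      intro i
      simp only [Finset.mem_filter, Finset.mem_range, Finset.mem_union, Finset.mem_Ico]
      rintro ⟨h1, h2⟩
      by_cases hi : x.length - w.length ≤ i
      · exact Or.inr ⟨hi, h1⟩
      · left
        refine ⟨h1, ?_⟩
        rw [win_iff _ _ hw] at h2 ⊢
        refine ⟨by omega, fun t ht => ?_⟩
        rw [← h2.2 t ht, hget _ (by omega)]
    refine (Finset.card_le_card this).trans ((Finset.card_union_le _ _).trans ?_)
    rw [Nat.card_Ico]
    omega

lemma occ_append (w x y : List Bool) (hw : w ≠ []) :
    occ w x + occ w y ≤ occ w (x ++ y) ∧ occ w (x ++ y) ≤ occ w x + occ w y + w.length := by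
  have h := count_append_left w x y hw
  have : occ w (x ++ y) =
      Nat.count (fun j => ((x ++ y).drop j).take w.length = w) x.length + occ w y := by
    rw [occ_count_length w (x ++ y) hw, List.length_append, Nat.count_add,
      occ_count_length w y hw]
    congr 2
    funext k
    rw [← List.drop_drop, List.drop_left]
  omega

lemma count_cyc (n : ℕ) (hn : 1 ≤ n) (w : List Bool) (hk : w.length ≤ n) :
    Nat.count (fun i => ∀ t < w.length, (db n).getD ((i + t) % 2 ^ n) false = w.getD t false)
      (2 ^ n) = 2 ^ (n - w.length) := by
  obtain ⟨hlen, hdb⟩ := db_spec n hn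
  have hn2 : n < 2 ^ n := Nat.lt_two_pow_self
  set d := db n with hd
  rw [Nat.count_eq_card_filter_range]
  rw [Finset.card_eq_sum_card_fiberwise (t := (Finset.univ : Finset (Fin (n - w.length) → Bool)))
    (f := fun (i : ℕ) (t : Fin (n - w.length)) => d.getD ((i + (w.length + t)) % 2 ^ n) false) (by intro i _; simp)]
  have hone : ∀ u : Fin (n - w.length) → Bool,
      (Finset.filter (fun i => (fun t : Fin (n - w.length) =>
          d.getD ((i + (w.length + t)) % 2 ^ n) false) = u)
        (Finset.filter (fun i => ∀ t < w.length, d.getD ((i + t) % 2 ^ n) false = w.getD t false)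
          (Finset.range (2 ^ n)))).card = 1 := by
    intro u
    have hvl : (w ++ List.ofFn u).length = n := by simp; omega
    have h1 := hdb (w ++ List.ofFn u) hvl
    have hvne : w ++ List.ofFn u ≠ [] := by
      intro h; rw [h] at hvl; simp at hvl; omega
    rw [occ_count] at h1
    have hyl : (d ++ d.take (n - 1)).length = 2 ^ n + (n - 1) := by simp [hlen]; omega
    rw [hyl, hvl, show 2 ^ n + (n - 1) + 1 - n = 2 ^ n by omega, Nat.count_eq_card_filter_range] at h1
    rw [← h1, Finset.filter_filter]
    congr 1
    apply Finset.filter_congr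
    intro i hi
    rw [Finset.mem_range] at hi
    have hwin := win_iff (w ++ List.ofFn u) (d ++ d.take (n - 1)) hvne i
    rw [hvl, hyl] at hwin
    rw [hwin]
    have hget : ∀ m, m < 2 ^ n + (n - 1) →
        (d ++ d.take (n - 1)).getD m false = d.getD (m % 2 ^ n) false := by
      intro m hm
      by_cases h : m < 2 ^ n
      · rw [List.getD_append _ _ _ _ (by omega), Nat.mod_eq_of_lt h]
      · rw [List.getD_append_right _ _ _ _ (by omega), hlen]
        have : m % 2 ^ n = m - 2 ^ n := by
          rw [Nat.mod_eq_sub_mod (by omega), Nat.mod_eq_of_lt (by omega)]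
        rw [this, List.getD_eq_getElem _ _ (by simp; omega), List.getD_eq_getElem _ _ (by omega)]
        simp
    constructor
    · rintro ⟨ha, hb⟩
      refine ⟨by omega, fun t ht => ?_⟩
      rw [hget _ (by omega)]
      by_cases h : t < w.length
      · rw [ha t h, List.getD_append _ _ _ _ h]
      · rw [List.getD_append_right _ _ _ _ (by omega),
          List.getD_eq_getElem (List.ofFn u) _ (by rw [List.length_ofFn]; omega), List.getElem_ofFn]
        refine Eq.trans ?_ (congrFun hb ⟨t - w.length, by omega⟩)
        simp only
        rw [Nat.add_sub_cancel' (by omega)]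
    · rintro ⟨_, h⟩
      refine ⟨fun t ht => ?_, ?_⟩
      · have := h t (by omega)
        rw [hget _ (by omega), List.getD_append _ _ _ _ ht] at this
        exact this
      · funext t
        have := h (w.length + t) (by omega)
        rw [hget _ (by omega), List.getD_append_right _ _ _ _ (by omega),
          List.getD_eq_getElem (List.ofFn u) _ (by rw [List.length_ofFn]; omega), List.getElem_ofFn] at this
        rw [this]
        congr 1
        ext
        simp
  rw [Finset.sum_congr rfl (fun u _ => hone u)]
  simp

lemma count_cell (n : ℕ) (hn : 1 ≤ n) (w : List Bool) (hw : w ≠ []) (hk : w.length ≤ n) (s : ℕ) :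
    Nat.count (fun j => (((db n).rotate s ++ (db n).rotate s).drop j).take w.length = w)
      ((db n).rotate s).length = 2 ^ (n - w.length) := by
  rw [← count_cyc n hn w hk]
  have hlen := (db_spec n hn).1
  have hn2 : n < 2 ^ n := Nat.lt_two_pow_self
  set Q : ℕ → Prop :=
    fun i => ∀ t < w.length, (db n).getD ((i + t) % 2 ^ n) false = w.getD t false with hQ
  have hper : Function.Periodic Q (2 ^ n) := by
    intro i
    simp only [hQ, show ∀ t, i + 2 ^ n + t = (i + t) + 2 ^ n by intro t; omega, Nat.add_mod_right]
  rw [← Nat.filter_Ico_card_eq_of_periodic s (2 ^ n) Q hper]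
  rw [List.length_rotate, hlen, Nat.count_eq_card_filter_range]
  have himg : Finset.Ico s (s + 2 ^ n) = (Finset.range (2 ^ n)).map (addRightEmbedding s) := by
    rw [Finset.range_eq_Ico, Finset.map_add_right_Ico]
    congr 1 <;> omega
  rw [himg, Finset.filter_map, Finset.card_map]
  congr 1
  apply Finset.filter_congr
  intro j hj
  rw [Finset.mem_range] at hj
  rw [win_iff _ _ hw]
  simp only [Function.comp, addRightEmbedding_apply, hQ, List.length_append, List.length_rotate, hlen]
  have hr : ∀ m, m < 2 ^ n → ((db n).rotate s).getD m false = (db n).getD ((m + s) % 2 ^ n) false := by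
    intro m hm
    rw [List.getD_eq_getElem _ _ (by simp [hlen, hm]), List.getElem_rotate,
      List.getD_eq_getElem _ _ (by rw [hlen]; exact Nat.mod_lt _ (by positivity))]
    simp [hlen]
  have hget : ∀ m, m < 2 ^ n + 2 ^ n →
      ((db n).rotate s ++ (db n).rotate s).getD m false = (db n).getD ((m + s) % 2 ^ n) false := by
    intro m hm
    by_cases h : m < 2 ^ n
    · rw [List.getD_append _ _ _ _ (by simp [hlen, h]), hr m h]
    · rw [List.getD_append_right _ _ _ _ (by simp [hlen]; omega), List.length_rotate, hlen,
        hr _ (by omega)]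
      congr 1
      rw [show m + s = (m - 2 ^ n + s) + 2 ^ n by omega, Nat.add_mod_right]
  constructor
  · rintro ⟨_, h⟩ t ht
    rw [← h t ht, hget _ (by omega)]
    congr 2; omega
  · intro h
    refine ⟨by omega, fun t ht => ?_⟩
    rw [← h t ht, hget _ (by omega)]
    congr 2; omega

/-- Discrepancy of `x` for the word `w`. -/
noncomputable def disc (w x : List Bool) : ℝ := |(occ w x : ℝ) - x.length / 2 ^ w.length|

lemma disc_append (w x y : List Bool) (hw : w ≠ []) :
    disc w (x ++ y) ≤ disc w x + disc w y + w.length := by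
  obtain ⟨h1, h2⟩ := occ_append w x y hw
  have h1' : (occ w x : ℝ) + occ w y ≤ occ w (x ++ y) := by exact_mod_cast h1
  have h2' : (occ w (x ++ y) : ℝ) ≤ occ w x + occ w y + w.length := by exact_mod_cast h2
  unfold disc
  rw [List.length_append]
  push_cast
  rw [add_div]
  have a1 := le_abs_self ((occ w x : ℝ) - x.length / 2 ^ w.length)
  have a2 := neg_abs_le ((occ w x : ℝ) - x.length / 2 ^ w.length)
  have b1 := le_abs_self ((occ w y : ℝ) - y.length / 2 ^ w.length)
  have b2 := neg_abs_le ((occ w y : ℝ) - y.length / 2 ^ w.length)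
  rw [abs_le]
  constructor <;> linarith

lemma disc_le_length (w x : List Bool) (hw : w ≠ []) : disc w x ≤ x.length := by
  have h : occ w x ≤ x.length := by
    rw [occ_count_length w x hw]; exact Nat.count_le _
  have h' : (occ w x : ℝ) ≤ x.length := by exact_mod_cast h
  have h2 : (x.length : ℝ) / 2 ^ w.length ≤ x.length :=
    div_le_self (by positivity) (one_le_pow₀ (by norm_num))
  have h3 : (0 : ℝ) ≤ x.length / 2 ^ w.length := by positivity
  have h4 : (0 : ℝ) ≤ occ w x := by positivity
  unfold disc
  rw [abs_le]
  constructor <;> linarith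

lemma disc_nil (w : List Bool) (hw : w ≠ []) : disc w [] = 0 :=
  le_antisymm (by simpa using disc_le_length w [] hw) (abs_nonneg _)

lemma disc_cell (n : ℕ) (hn : 1 ≤ n) (w : List Bool) (hw : w ≠ []) (hk : w.length ≤ n) (s : ℕ) :
    disc w ((db n).rotate s) ≤ w.length := by
  obtain ⟨h1, h2⟩ := count_append_left w ((db n).rotate s) ((db n).rotate s) hw
  rw [count_cell n hn w hw hk s] at h1 h2
  have hlen := (db_spec n hn).1
  have h1' : (occ w ((db n).rotate s) : ℝ) ≤ 2 ^ (n - w.length) := by exact_mod_cast h1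
  have h2' : (2 : ℝ) ^ (n - w.length) ≤ occ w ((db n).rotate s) + w.length := by exact_mod_cast h2
  unfold disc
  rw [List.length_rotate, hlen]
  push_cast
  rw [show (2 : ℝ) ^ n / 2 ^ w.length = 2 ^ (n - w.length) by
    rw [div_eq_iff (by positivity), ← pow_add, Nat.sub_add_cancel hk]]
  rw [abs_le]
  constructor <;> linarith [(Nat.cast_nonneg w.length : (0 : ℝ) ≤ w.length)]

lemma disc_flatten (w : List Bool) (hw : w ≠ []) (ls : List (List Bool))
    (h : ∀ x ∈ ls, disc w x ≤ w.length) : disc w ls.flatten ≤ 2 * w.length * ls.length := by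
  induction ls with
  | nil => simp [disc_nil w hw]
  | cons a l ih =>
    have h1 := ih (fun x hx => h x (List.mem_cons_of_mem _ hx))
    have h2 := h a List.mem_cons_self
    have h3 := disc_append w a l.flatten hw
    simp only [List.flatten_cons, List.length_cons]
    push_cast
    linarith

lemma disc_take_flatten (w : List Bool) (hw : w ≠ []) (c : ℕ) (ls : List (List Bool))
    (h : ∀ x ∈ ls, disc w x ≤ w.length ∧ x.length = c) (m : ℕ) :
    disc w (ls.flatten.take m) ≤ 2 * w.length * ls.length + c := by
  induction ls generalizing m with
  | nil => simp [disc_nil w hw]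
  | cons a l ih =>
    have h2 := h a List.mem_cons_self
    simp only [List.flatten_cons, List.length_cons]
    push_cast
    by_cases hm : m ≤ a.length
    · rw [List.take_append_of_le_length hm]
      have h3 := disc_le_length w (a.take m) hw
      have h4 : ((a.take m).length : ℝ) ≤ c := by
        rw [← h2.2]; exact_mod_cast List.length_take_le' _ _
      have : (0 : ℝ) ≤ 2 * w.length * (l.length + 1) := by positivity
      linarith
    · have h1 := ih (fun x hx => h x (List.mem_cons_of_mem _ hx)) (m - a.length)
      rw [List.take_append, List.take_of_length_le (by omega)]
      have h3 := disc_append w a (l.flatten.take (m - a.length)) hw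
      linarith

lemma Sblk_cells (n : ℕ) : ∃ ls : List (List Bool), Sblk n = ls.flatten ∧ ls.length = n ∧
    ∀ x ∈ ls, ∃ i, x = (db n).rotate i := by
  refine ⟨((List.range (2 ^ (n.factorization 2))).map
    (fun i => List.replicate (oddPart n) ((db n).rotate i))).flatten, ?_, ?_, ?_⟩
  · rw [List.flatten_flatten, List.map_map]
    rfl
  · rw [List.length_flatten, List.map_map]
    simp only [Function.comp_def, List.length_replicate, List.map_const', List.length_range,
      List.sum_replicate, smul_eq_mul, oddPart]
    exact Nat.ordProj_mul_ordCompl_eq_self n 2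
  · intro x hx
    simp only [List.mem_flatten, List.mem_map] at hx
    obtain ⟨l, ⟨i, _, rfl⟩, hx⟩ := hx
    exact ⟨i, List.eq_of_mem_replicate hx⟩

lemma flatten_length_const (c : ℕ) (ls : List (List Bool)) (h : ∀ x ∈ ls, x.length = c) :
    ls.flatten.length = ls.length * c := by
  induction ls with
  | nil => simp
  | cons a l ih =>
    rw [List.flatten_cons, List.length_append, ih (fun x hx => h x (List.mem_cons_of_mem _ hx)),
      h a List.mem_cons_self, List.length_cons]
    ring

lemma Sblk_length (n : ℕ) (hn : 1 ≤ n) : (Sblk n).length = n * 2 ^ n := by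
  obtain ⟨ls, h1, h2, h3⟩ := Sblk_cells n
  rw [h1, flatten_length_const (2 ^ n) ls, h2]
  intro x hx
  obtain ⟨i, rfl⟩ := h3 x hx
  rw [List.length_rotate, (db_spec n hn).1]

lemma disc_Sblk (n : ℕ) (hn : 1 ≤ n) (w : List Bool) (hw : w ≠ []) (hk : w.length ≤ n) :
    disc w (Sblk n) ≤ 2 * w.length * n := by
  obtain ⟨ls, h1, h2, h3⟩ := Sblk_cells n
  rw [h1]
  have := disc_flatten w hw ls (fun x hx => by
    obtain ⟨i, rfl⟩ := h3 x hx
    exact disc_cell n hn w hw hk i)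
  rwa [h2] at this

lemma disc_take_Sblk (n : ℕ) (hn : 1 ≤ n) (w : List Bool) (hw : w ≠ []) (hk : w.length ≤ n)
    (m : ℕ) : disc w ((Sblk n).take m) ≤ 2 * w.length * n + 2 ^ n := by
  obtain ⟨ls, h1, h2, h3⟩ := Sblk_cells n
  rw [h1]
  have := disc_take_flatten w hw (2 ^ n) ls (fun x hx => by
    obtain ⟨i, rfl⟩ := h3 x hx
    exact ⟨disc_cell n hn w hw hk i, by rw [List.length_rotate, (db_spec n hn).1]⟩) m
  rw [h2] at this
  exact_mod_cast this

lemma Sfin_succ (m : ℕ) : Sfin (m + 1) = Sfin m ++ Sblk (m + 1) := by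
  simp [Sfin, List.range_succ]

lemma Sfin_length_succ (m : ℕ) :
    (Sfin (m + 1)).length = (Sfin m).length + (m + 1) * 2 ^ (m + 1) := by
  rw [Sfin_succ, List.length_append, Sblk_length _ (by omega)]

lemma Sfin_length_ge (m : ℕ) : m * 2 ^ m ≤ (Sfin m).length := by
  cases m with
  | zero => simp
  | succ m => rw [Sfin_length_succ]; omega

lemma le_Sfin_length (m : ℕ) : m ≤ (Sfin m).length :=
  (Nat.le_mul_of_pos_right m (by positivity)).trans (Sfin_length_ge m)

lemma Sfin_mono {a b : ℕ} (h : a ≤ b) : Sfin a <+: Sfin b := by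
  induction h with
  | refl => exact List.prefix_rfl
  | step _ ih => exact ih.trans (by rw [Nat.succ_eq_add_one, Sfin_succ]; exact List.prefix_append _ _)

lemma Sfin_getD {a b i : ℕ} (ha : i < (Sfin a).length) (hb : i < (Sfin b).length) :
    (Sfin a).getD i false = (Sfin b).getD i false := by
  rcases le_total a b with h | h
  · obtain ⟨t, ht⟩ := Sfin_mono h
    rw [← ht, List.getD_append _ _ _ _ ha]
  · obtain ⟨t, ht⟩ := Sfin_mono h
    rw [← ht, List.getD_append _ _ _ _ hb]

lemma map_Sseq (m M : ℕ) (h : M ≤ (Sfin m).length) :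
    (List.range M).map Sseq = (Sfin m).take M := by
  apply List.ext_getElem
  · simp [h]
  · intro i h1 h2
    simp only [List.length_map, List.length_range] at h1
    simp only [List.getElem_map, List.getElem_range, List.getElem_take]
    rw [Sseq, Sfin_getD (b := m) (by have := le_Sfin_length (i + 1); omega) (by omega),
      List.getD_eq_getElem]

lemma disc_Sfin (w : List Bool) (hw : w ≠ []) (m : ℕ) (hm : w.length ≤ m) :
    disc w (Sfin m) ≤ disc w (Sfin w.length) + 3 * w.length * (m : ℝ) ^ 2 := by
  induction m, hm using Nat.le_induction with
  | base => have : (0 : ℝ) ≤ 3 * w.length * (w.length : ℝ) ^ 2 := by positivity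
            linarith
  | succ m hm ih =>
    have h1 := disc_append w (Sfin m) (Sblk (m + 1)) hw
    have h2 := disc_Sblk (m + 1) (by omega) w hw (by omega)
    rw [← Sfin_succ] at h1
    push_cast at h2 ⊢
    have h3 : (0 : ℝ) ≤ w.length * m := by positivity
    nlinarith

lemma sq_le_two_pow (m : ℕ) : m ^ 2 ≤ 4 * 2 ^ m := by
  induction m with
  | zero => simp
  | succ m ih =>
    have : m < 2 ^ m := Nat.lt_two_pow_self
    rw [pow_succ 2 m]
    nlinarith

lemma disc_main (w : List Bool) (hw : w ≠ []) (m M : ℕ) (hm : w.length ≤ m)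
    (h1 : (Sfin m).length ≤ M) (h2 : M ≤ (Sfin (m + 1)).length) :
    disc w ((List.range M).map Sseq) ≤
      (disc w (Sfin w.length) + 15 * w.length + 2) * 2 ^ m := by
  rw [map_Sseq _ _ h2, Sfin_succ, List.take_append, List.take_of_length_le h1]
  have a1 := disc_append w (Sfin m) ((Sblk (m + 1)).take (M - (Sfin m).length)) hw
  have a2 := disc_take_Sblk (m + 1) (by omega) w hw (by omega) (M - (Sfin m).length)
  have a3 := disc_Sfin w hw m hm
  have b1 : ((m : ℝ)) ^ 2 ≤ 4 * 2 ^ m := by exact_mod_cast sq_le_two_pow m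
  have b2 : (m : ℝ) + 1 ≤ 2 ^ m := by
    have : m + 1 ≤ 2 ^ m := Nat.lt_two_pow_self
    exact_mod_cast this
  have b3 : (1 : ℝ) ≤ 2 ^ m := one_le_pow₀ (by norm_num)
  have hk : (0 : ℝ) ≤ w.length := by positivity
  have hd : 0 ≤ disc w (Sfin w.length) := abs_nonneg _
  have c1 := mul_le_mul_of_nonneg_left b1 hk
  have c2 := mul_le_mul_of_nonneg_left b2 hk
  have c3 := mul_le_mul_of_nonneg_left b3 hk
  have c4 := mul_le_mul_of_nonneg_left b3 hd
  rw [pow_succ] at a2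
  push_cast at a2
  nlinarith

/-- The sequence `S = S_1 S_2 S_3 ⋯` is normal: for every nonempty `w`,
`occ(w, S↾m)/m → 2^{-|w|}`. -/
theorem stmt14 (w : List Bool) (hw : w ≠ []) :
    Filter.Tendsto (fun m : ℕ => (occ w ((List.range m).map Sseq) : ℝ) / m)
      Filter.atTop (nhds ((2 ^ w.length : ℝ)⁻¹)) := by
  rw [Metric.tendsto_atTop]
  intro ε hε
  set A : ℝ := disc w (Sfin w.length) + 15 * w.length + 2 with hA
  have hApos : 0 < A := by
    have hd : 0 ≤ disc w (Sfin w.length) := abs_nonneg _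
    positivity
  obtain ⟨m1, hm1⟩ := exists_nat_gt (A / ε)
  set m0 := max m1 (max w.length 1) with hm0
  refine ⟨(Sfin m0).length, fun M hM => ?_⟩
  have hex : ∃ m, M < (Sfin m).length := ⟨M + 1, by have := le_Sfin_length (M + 1); omega⟩
  classical
  have hspec := Nat.find_spec hex
  have hgt : m0 < Nat.find hex := by
    by_contra! h
    have := (Sfin_mono h).length_le
    omega
  obtain ⟨m, hm⟩ : ∃ m, Nat.find hex = m + 1 := ⟨Nat.find hex - 1, by omega⟩
  have hlow : (Sfin m).length ≤ M := not_lt.1 (Nat.find_min hex (m := m) (by omega))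
  rw [hm] at hspec
  have hmm1 : m1 ≤ m := by have := le_max_left m1 (max w.length 1); omega
  have hmw : w.length ≤ m := by
    have := le_max_right m1 (max w.length 1); have := le_max_left w.length 1; omega
  have hm1' : 1 ≤ m := by
    have := le_max_right m1 (max w.length 1); have := le_max_right w.length 1; omega
  have hD := disc_main w hw m M hmw hlow hspec.le
  rw [← hA] at hD
  have hMge : (m : ℝ) * 2 ^ m ≤ M := by exact_mod_cast (Sfin_length_ge m).trans hlow
  have hmpos : (0 : ℝ) < m := by exact_mod_cast hm1'
  have hMpos : (0 : ℝ) < M := lt_of_lt_of_le (by positivity) hMge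
  have hAm : A < ε * m := by
    have h1 : (m1 : ℝ) ≤ m := by exact_mod_cast hmm1
    rw [div_lt_iff₀ hε] at hm1
    nlinarith
  rw [Real.dist_eq]
  have heq : (occ w ((List.range M).map Sseq) : ℝ) / M - (2 ^ w.length : ℝ)⁻¹ =
      ((occ w ((List.range M).map Sseq) : ℝ) - M / 2 ^ w.length) / M := by
    field_simp
  rw [heq, abs_div, abs_of_pos hMpos, div_lt_iff₀ hMpos]
  have hD' : |(occ w ((List.range M).map Sseq) : ℝ) - M / 2 ^ w.length| ≤ A * 2 ^ m := by
    have := hD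
    unfold disc at this
    simpa using this
  calc _ ≤ A * 2 ^ m := hD'
    _ < ε * m * 2 ^ m := by gcongr
    _ = ε * (m * 2 ^ m) := by ring
    _ ≤ ε * M := by gcongr
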